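/- Let ω be a measurement function and V a finite-step control Lyapunov function for time step M with afcl q, decay function α ∈ K∞ with α(s) < s for s > 0, and transient bound V(g^i(ξ,q(ξ))) ≤ κ̂(V(ξ)) for all ξ ∈ X and i = 1,…,M−1, with κ̂ ∈ K∞. Then there exists ρ ∈ K∞ such that, if V is replaced by Ṽ := ρ ∘ V as the running cost, the classic MPC scheme (minimizing Σ_{i=0}^{N−1} Ṽ(x(i,ξ,u_N)) over admissible sequences and applying the first element of an optimal sequence at each time step) is semiglobally practically asymptotically ω-stabilizing in A := ω⁻¹(0) with respect to the optimization horizon N. -/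

import Mathlib

open Filter Finset NNReal

noncomputable section

/-- A class-K function on `[0,∞)`: continuous, strictly increasing, zero at zero. -/
def ClassK (κ : ℝ≥0 → ℝ≥0) : Prop :=
  Continuous κ ∧ StrictMono κ ∧ κ 0 = 0

/-- A class-K∞ function: class K and unbounded. -/
def ClassKInf (κ : ℝ≥0 → ℝ≥0) : Prop :=
  ClassK κ ∧ Filter.Tendsto κ Filter.atTop Filter.atTop

/-- A class-KL function. -/
def ClassKL (β : ℝ≥0 → ℝ≥0 → ℝ≥0) : Prop :=
  Continuous (fun p : ℝ≥0 × ℝ≥0 => β p.1 p.2) ∧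
  (∀ s : ℝ≥0, ClassK fun r => β r s) ∧
  (∀ r : ℝ≥0, Antitone (fun s => β r s) ∧
    Filter.Tendsto (fun s => β r s) Filter.atTop (nhds 0))

/-- The iterates `g^j(ξ, u)` of the control system `x⁺ = g(x,u)` under the
control sequence `u` starting from `ξ`. -/
def iter {n m : ℕ} (g : (Fin n → ℝ) → (Fin m → ℝ) → (Fin n → ℝ)) (ξ : Fin n → ℝ)
    (u : ℕ → Fin m → ℝ) : ℕ → Fin n → ℝ
  | 0 => ξ
  | j + 1 => g (iter g ξ u j) (u j)

/-- `q : X → U^M` is an admissible finite-step feedback control law (afcl) of length `M`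
for the system `g` with state constraint set `X`, input constraint set `U` and
measurement function `ω`. -/
def IsAfcl {n m : ℕ} (ω : (Fin n → ℝ) → ℝ≥0) (X : Set (Fin n → ℝ)) (U : Set (Fin m → ℝ))
    (g : (Fin n → ℝ) → (Fin m → ℝ) → (Fin n → ℝ)) (M : ℕ)
    (q : (Fin n → ℝ) → ℕ → Fin m → ℝ) : Prop :=
  (∀ ξ ∈ X, ∀ j < M, q ξ j ∈ U) ∧
  (∀ ξ ∈ X, ∀ j : ℕ, 1 ≤ j → j ≤ M → iter g ξ (q ξ) j ∈ X) ∧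
  (∀ j : ℕ, 1 ≤ j → j ≤ M → ∃ κ : ℝ≥0 → ℝ≥0, ClassK κ ∧
    ∀ ξ ∈ X, ω (iter g ξ (q ξ) j) ≤ κ (ω ξ))

/-- States of the closed loop under the `M`-step feedback `q` at time instants `kM`. -/
def loopBase {n m : ℕ} (g : (Fin n → ℝ) → (Fin m → ℝ) → (Fin n → ℝ)) (M : ℕ)
    (q : (Fin n → ℝ) → ℕ → Fin m → ℝ) (ξ : Fin n → ℝ) : ℕ → Fin n → ℝ
  | 0 => ξ
  | k + 1 => iter g (loopBase g M q ξ k) (q (loopBase g M q ξ k)) M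

/-- The closed-loop trajectory `x_q(t, ξ)`: for `t = kM + j`, `j ∈ {0,…,M-1}`,
`x_q(kM + j) = g^j(x_q(kM), q(x_q(kM)))`. -/
def closedLoop {n m : ℕ} (g : (Fin n → ℝ) → (Fin m → ℝ) → (Fin n → ℝ)) (M : ℕ)
    (q : (Fin n → ℝ) → ℕ → Fin m → ℝ) (ξ : Fin n → ℝ) (t : ℕ) : Fin n → ℝ :=
  iter g (loopBase g M q ξ (t / M)) (q (loopBase g M q ξ (t / M))) (t % M)

/-- A control sequence `u` of length `N` is admissible from `ξ`: all applied inputs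
lie in `U` and the resulting states remain in `X`. -/
def Adm {n m : ℕ} (X : Set (Fin n → ℝ)) (U : Set (Fin m → ℝ))
    (g : (Fin n → ℝ) → (Fin m → ℝ) → (Fin n → ℝ)) (ξ : Fin n → ℝ) (N : ℕ)
    (u : ℕ → Fin m → ℝ) : Prop :=
  ∀ j < N, u j ∈ U ∧ iter g ξ u (j + 1) ∈ X

/-- The MPC cost functional `Σ_{i=0}^{N-1} V(x(i,ξ,u))`. -/
def cost {n m : ℕ} (V : (Fin n → ℝ) → ℝ≥0)
    (g : (Fin n → ℝ) → (Fin m → ℝ) → (Fin n → ℝ)) (N : ℕ) (ξ : Fin n → ℝ)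
    (u : ℕ → Fin m → ℝ) : ℝ≥0 :=
  ∑ i ∈ Finset.range N, V (iter g ξ u i)

/-- `uopt` is a selection of optimal control sequences for the horizon-`N`
optimal control problem with running cost `V`. -/
def IsOptSel {n m : ℕ} (X : Set (Fin n → ℝ)) (U : Set (Fin m → ℝ))
    (g : (Fin n → ℝ) → (Fin m → ℝ) → (Fin n → ℝ)) (V : (Fin n → ℝ) → ℝ≥0) (N : ℕ)
    (uopt : (Fin n → ℝ) → ℕ → Fin m → ℝ) : Prop :=
  ∀ ξ ∈ X, Adm X U g ξ N (uopt ξ) ∧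
    ∀ u : ℕ → Fin m → ℝ, Adm X U g ξ N u → cost V g N ξ (uopt ξ) ≤ cost V g N ξ u

/-- The MPC closed loop: at every time step apply the first element of the
(selected) optimal control sequence. -/
def mpcLoop {n m : ℕ} (g : (Fin n → ℝ) → (Fin m → ℝ) → (Fin n → ℝ))
    (uopt : (Fin n → ℝ) → ℕ → Fin m → ℝ) (ξ : Fin n → ℝ) : ℕ → Fin n → ℝ
  | 0 => ξ
  | t + 1 => g (mpcLoop g uopt ξ t) (uopt (mpcLoop g uopt ξ t) 0)

/-!
Because `α` lies below the identity, the series `∑ₖ 2ᵏ (αᵏ s - ε)₊`, summed with weights over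
cut-off levels `ε ↓ 0`, give `r ∈ K∞` with `r ∘ α ≤ r / 2`. Take `ρ := r ∘ σ⁻¹` with `σ = id + κ̂`:
during each period of the finite-step feedback the running cost `W := ρ ∘ V` is at most the value
of `r ∘ V` at its beginning, and these values halve from period to period. Hence the optimal cost
is at most some `B (W ξ)`, `B ∈ K`, whatever the horizon.

For a long horizon some state on the optimal tail has running cost at most a small `w`. Following
the tail up to there and a cheap sequence afterwards shows that the optimal value `Y` satisfies
`Y⁺ + W ≤ Y + B w` along the closed loop. With `Y ≤ B W` this becomes `Y⁺ ≤ max (T Y) (γ (B w))` for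
some `T` below the identity, and rescaling `Y` by the series above, now for `T`, makes the decay
exponential.
-/

section ComparisonFunctions

lemma ClassK.continuous {κ : ℝ≥0 → ℝ≥0} (hκ : ClassK κ) : Continuous κ := hκ.1

lemma ClassK.strictMono {κ : ℝ≥0 → ℝ≥0} (hκ : ClassK κ) : StrictMono κ := hκ.2.1

lemma ClassK.monotone {κ : ℝ≥0 → ℝ≥0} (hκ : ClassK κ) : Monotone κ := hκ.strictMono.monotone

lemma ClassK.map_zero {κ : ℝ≥0 → ℝ≥0} (hκ : ClassK κ) : κ 0 = 0 := hκ.2.2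

lemma ClassKInf.classK {κ : ℝ≥0 → ℝ≥0} (hκ : ClassKInf κ) : ClassK κ := hκ.1

lemma ClassK.comp {κ₁ κ₂ : ℝ≥0 → ℝ≥0} (h₁ : ClassK κ₁) (h₂ : ClassK κ₂) :
    ClassK fun s => κ₁ (κ₂ s) :=
  ⟨h₁.continuous.comp h₂.continuous, h₁.strictMono.comp h₂.strictMono,
    (congrArg κ₁ h₂.map_zero).trans h₁.map_zero⟩

lemma ClassKInf.comp {κ₁ κ₂ : ℝ≥0 → ℝ≥0} (h₁ : ClassKInf κ₁) (h₂ : ClassKInf κ₂) :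
    ClassKInf fun s => κ₁ (κ₂ s) :=
  ⟨h₁.classK.comp h₂.classK, h₁.2.comp h₂.2⟩

lemma ClassKInf.add_monotone {κ f : ℝ≥0 → ℝ≥0} (hκ : ClassKInf κ) (hf : Continuous f)
    (hmono : Monotone f) (hf0 : f 0 = 0) : ClassKInf fun s => κ s + f s :=
  ⟨⟨hκ.classK.continuous.add hf, hκ.classK.strictMono.add_monotone hmono, by
    simp [hκ.classK.map_zero, hf0]⟩, tendsto_atTop_mono (fun _ => le_self_add) hκ.2⟩

lemma classKInf_const_mul {c : ℝ≥0} (hc : 0 < c) : ClassKInf fun s => c * s :=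
  ⟨⟨continuous_const_mul c, fun _ _ h => mul_lt_mul_of_pos_left h hc, mul_zero c⟩,
    Tendsto.const_mul_atTop hc tendsto_id⟩

lemma classKInf_orderIso (e : ℝ≥0 ≃o ℝ≥0) : ClassKInf e :=
  ⟨⟨e.continuous, e.strictMono, map_bot e⟩, e.tendsto_atTop⟩

lemma ClassKInf.exists_orderIso {κ : ℝ≥0 → ℝ≥0} (hκ : ClassKInf κ) :
    ∃ e : ℝ≥0 ≃o ℝ≥0, ⇑e = κ := by
  have hbot : Tendsto κ atBot atBot := by
    simpa [OrderBot.atBot_eq, tendsto_pure_left] using hκ.classK.map_zero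
  exact ⟨hκ.classK.strictMono.orderIsoOfSurjective κ
    (hκ.classK.continuous.surjective hκ.2 hbot), rfl⟩

lemma ClassK.exists_pos_map_le {κ : ℝ≥0 → ℝ≥0} (hκ : ClassK κ) {ε : ℝ≥0} (hε : 0 < ε) :
    ∃ s, 0 < s ∧ κ s ≤ ε := by
  have hlim : Tendsto κ (nhdsWithin 0 (Set.Ioi 0)) (nhds 0) := by
    simpa only [hκ.map_zero] using (hκ.continuous.tendsto 0).mono_left nhdsWithin_le_nhds
  exact (eventually_mem_nhdsWithin.and (hlim.eventually_le_const hε)).exists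

lemma classKL_comp_rpow_mul {Φ Ψ : ℝ≥0 → ℝ≥0} (hΦ : ClassK Φ) (hΨ : ClassK Ψ) {c : ℝ≥0}
    (hc0 : 0 < c) (hc1 : c < 1) : ClassKL fun r s => Φ (c ^ (s : ℝ) * Ψ r) := by
  have hpow : Continuous fun s : ℝ≥0 => c ^ (s : ℝ) := by
    rw [NNReal.isEmbedding_coe.continuous_iff]
    simpa [Function.comp_def] using
      (Real.continuous_const_rpow (NNReal.coe_ne_zero.2 hc0.ne')).comp NNReal.continuous_coe
  have hlim : Tendsto (fun s : ℝ≥0 => c ^ (s : ℝ)) atTop (nhds 0) := by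
    rw [← NNReal.tendsto_coe]
    simpa [Function.comp_def] using
      (tendsto_rpow_atTop_of_base_lt_one (c : ℝ) (neg_one_lt_zero.trans_le c.coe_nonneg) hc1).comp
        (NNReal.tendsto_coe_atTop.2 tendsto_id)
  refine ⟨?_, fun s => ?_, fun r => ⟨fun s t hst => ?_, ?_⟩⟩
  · exact hΦ.continuous.comp
      ((hpow.comp continuous_snd).mul (hΨ.continuous.comp continuous_fst))
  · exact hΦ.comp ((classKInf_const_mul (NNReal.rpow_pos hc0)).classK.comp hΨ)
  · apply hΦ.monotone
    gcongr ?_ * _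
    exact NNReal.rpow_le_rpow_of_exponent_ge hc0 hc1.le hst
  · simpa [Function.comp_def, hΦ.map_zero] using
      (hΦ.continuous.tendsto _).comp (hlim.mul_const (Ψ r))

end ComparisonFunctions

section Contractions

lemma le_self_of_forall_pos_lt {T : ℝ≥0 → ℝ≥0} (hT : Continuous T)
    (hlt : ∀ s, 0 < s → T s < s) (s : ℝ≥0) : T s ≤ s := by
  have hclosed : IsClosed {s | T s ≤ s} := isClosed_le hT continuous_id
  have hdense : s ∈ closure (Set.Ioi 0) := by simp [closure_Ioi]
  exact hclosed.closure_subset_iff.2 (fun s hs => (hlt s hs).le) hdense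

lemma tendsto_iterate_zero_of_lt_self {T : ℝ≥0 → ℝ≥0} (hT : Continuous T)
    (hlt : ∀ s, 0 < s → T s < s) (s : ℝ≥0) :
    Tendsto (fun k => T^[k] s) atTop (nhds 0) := by
  have hanti : Antitone fun k => T^[k] s := antitone_nat_of_succ_le fun k => by
    rw [Function.iterate_succ_apply']
    exact le_self_of_forall_pos_lt hT hlt _
  have hlim := tendsto_atTop_ciInf hanti (OrderBot.bddBelow _)
  have hfixed := isFixedPt_of_tendsto_iterate hlim hT.continuousAt
  rcases eq_zero_or_pos (⨅ k, T^[k] s) with h | h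
  · rwa [h] at hlim
  · exact absurd hfixed (hlt _ h).ne

lemma continuous_tsum_of_monotone {ι α : Type*} [TopologicalSpace α] [LinearOrder α]
    [OrderTopology α] [NoMaxOrder α] {f : ι → α → ℝ≥0} (hf : ∀ i, Continuous (f i))
    (hmono : ∀ i, Monotone (f i)) (hsum : ∀ x, Summable fun i => f i x) :
    Continuous fun x => ∑' i, f i x := by
  refine continuous_iff_continuousAt.2 fun x => ?_
  obtain ⟨b, hb⟩ := exists_gt x
  have hon : ContinuousOn (fun y => ∑' i, (f i y : ℝ)) (Set.Iio b) := by
    refine continuousOn_tsum (fun i => (NNReal.continuous_coe.comp (hf i)).continuousOn)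
      (NNReal.summable_coe.2 (hsum b)) fun i y hy => ?_
    simpa using hmono i (le_of_lt hy)
  rw [ContinuousAt, ← NNReal.tendsto_coe]
  simpa only [NNReal.coe_tsum] using (hon.continuousAt (Iio_mem_nhds hb)).tendsto

/-- The series `∑ₖ Lᵏ (Tᵏ s - ε)₊`, with the truncated subtraction of `ℝ≥0` as the positive part.
It solves `L * D (T s) ≤ D s`, and cutting off at the level `ε` makes it a finite sum when the
iterates of `T` tend to `0`. -/
def discountedExcess (T : ℝ≥0 → ℝ≥0) (L ε s : ℝ≥0) : ℝ≥0 :=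
  ∑' k, L ^ k * (T^[k] s - ε)

section DiscountedExcess

variable {T : ℝ≥0 → ℝ≥0} {L ε : ℝ≥0}

lemma summable_discountedExcess (hT : Continuous T) (hlt : ∀ s, 0 < s → T s < s) (hε : 0 < ε)
    (s : ℝ≥0) : Summable fun k => L ^ k * (T^[k] s - ε) := by
  obtain ⟨K, hK⟩ := eventually_atTop.1
    ((tendsto_iterate_zero_of_lt_self hT hlt s).eventually_le_const hε)
  refine summable_of_ne_finset_zero (s := range K) fun k hk => ?_
  rw [tsub_eq_zero_of_le (hK k (by simpa using hk)), mul_zero]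

lemma monotone_discountedExcess_term (hmono : Monotone T) (k : ℕ) :
    Monotone fun s => L ^ k * (T^[k] s - ε) := fun _ _ h => by
  dsimp only
  gcongr
  exact hmono.iterate k h

lemma continuous_discountedExcess (hT : Continuous T) (hmono : Monotone T)
    (hlt : ∀ s, 0 < s → T s < s) (hε : 0 < ε) : Continuous (discountedExcess T L ε) :=
  continuous_tsum_of_monotone
    (fun k => continuous_const.mul ((hT.iterate k).sub continuous_const))
    (monotone_discountedExcess_term hmono) (summable_discountedExcess hT hlt hε)

lemma monotone_discountedExcess (hT : Continuous T) (hmono : Monotone T)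
    (hlt : ∀ s, 0 < s → T s < s) (hε : 0 < ε) : Monotone (discountedExcess T L ε) := fun x y h =>
  (summable_discountedExcess hT hlt hε x).tsum_le_tsum
    (fun k => monotone_discountedExcess_term hmono k h) (summable_discountedExcess hT hlt hε y)

lemma discountedExcess_lt (hT : Continuous T) (hmono : Monotone T)
    (hlt : ∀ s, 0 < s → T s < s) (hε : 0 < ε) {x y : ℝ≥0} (hxy : x < y) (hy : ε < y) :
    discountedExcess T L ε x < discountedExcess T L ε y := by
  have hhead : L ^ 0 * (T^[0] x - ε) < L ^ 0 * (T^[0] y - ε) := by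
    simpa [lt_tsub_iff_right, tsub_add_eq_max] using ⟨hxy, hy⟩
  exact NNReal.tsum_lt_tsum (fun k => monotone_discountedExcess_term hmono k hxy.le) hhead
    (summable_discountedExcess hT hlt hε y)

lemma discountedExcess_zero (hT0 : T 0 = 0) : discountedExcess T L ε 0 = 0 := by
  simp [discountedExcess, Function.iterate_fixed hT0]

lemma sub_le_discountedExcess (hT : Continuous T) (hlt : ∀ s, 0 < s → T s < s) (hε : 0 < ε)
    (s : ℝ≥0) : s - ε ≤ discountedExcess T L ε s := by
  simpa [discountedExcess] using (summable_discountedExcess (L := L) hT hlt hε s).le_tsum' 0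

lemma mul_discountedExcess_map_le (hT : Continuous T) (hlt : ∀ s, 0 < s → T s < s)
    (hε : 0 < ε) (s : ℝ≥0) : L * discountedExcess T L ε (T s) ≤ discountedExcess T L ε s := by
  have hshift : L * discountedExcess T L ε (T s) = ∑' k, L ^ (k + 1) * (T^[k + 1] s - ε) := by
    rw [discountedExcess, ← NNReal.tsum_mul_left]
    simp only [Function.iterate_succ_apply, pow_succ', mul_assoc]
  rw [hshift]
  exact NNReal.tsum_comp_le_tsum_of_inj (summable_discountedExcess hT hlt hε s)
    (add_left_injective 1)

end DiscountedExcess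

lemma exists_pos_weights_summable {p : ℕ → ℝ≥0 → ℝ≥0} (hp : ∀ n, Monotone (p n)) :
    ∃ c : ℕ → ℝ≥0, (∀ n, 0 < c n) ∧ ∀ s, Summable fun n => c n * p n s := by
  refine ⟨fun n => (1 / 2) ^ n / (1 + p n n), fun n => by positivity, fun s => ?_⟩
  obtain ⟨K, hK⟩ := exists_nat_ge s
  rw [← NNReal.summable_nat_add_iff K]
  refine NNReal.summable_of_le (fun n => ?_) ((NNReal.summable_nat_add_iff K).2
    (NNReal.summable_geometric (r := 1 / 2) (NNReal.half_lt_self one_ne_zero)))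
  have hs : s ≤ ((n + K : ℕ) : ℝ≥0) := hK.trans (by exact_mod_cast Nat.le_add_left K n)
  rw [div_mul_eq_mul_div]
  exact div_le_of_le_mul₀ zero_le zero_le
    (mul_le_mul_of_nonneg_left ((hp _ hs).trans le_add_self) zero_le)

lemma exists_classKInf_map_le_mul {T : ℝ≥0 → ℝ≥0} (hT : Continuous T) (hmono : Monotone T)
    (hlt : ∀ s, 0 < s → T s < s) {c : ℝ≥0} (hc : 0 < c) :
    ∃ χ : ℝ≥0 → ℝ≥0, ClassKInf χ ∧ ∀ s, χ (T s) ≤ c * χ s := by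
  have hT0 : T 0 = 0 := le_zero_iff.1 (le_self_of_forall_pos_lt hT hlt 0)
  have hε (n : ℕ) : (0 : ℝ≥0) < 1 / (n + 1) := by positivity
  let p (n : ℕ) : ℝ≥0 → ℝ≥0 := discountedExcess T c⁻¹ (1 / (n + 1))
  have hp_mono (n : ℕ) : Monotone (p n) := monotone_discountedExcess hT hmono hlt (hε n)
  obtain ⟨a, ha, hsum⟩ := exists_pos_weights_summable hp_mono
  have hterm_mono (n : ℕ) : Monotone fun s => a n * p n s := (hp_mono n).const_mul' _
  refine ⟨fun s => ∑' n, a n * p n s, ⟨⟨?_, fun x y hxy => ?_, ?_⟩, ?_⟩, fun s => ?_⟩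
  · exact continuous_tsum_of_monotone
      (fun n => continuous_const.mul (continuous_discountedExcess hT hmono hlt (hε n)))
      hterm_mono hsum
  · obtain ⟨n, hn⟩ : ∃ n : ℕ, (1 : ℝ≥0) / (n + 1) < y :=
      exists_nat_one_div_lt (zero_le.trans_lt hxy)
    exact NNReal.tsum_lt_tsum (i := n) (fun k => hterm_mono k hxy.le)
      (mul_lt_mul_of_pos_left (discountedExcess_lt hT hmono hlt (hε n) hxy hn) (ha n)) (hsum y)
  · simp [p, discountedExcess_zero hT0]
  · have hlower (s : ℝ≥0) : a 0 * (s - 1) ≤ ∑' n, a n * p n s := calc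
      a 0 * (s - 1) ≤ a 0 * p 0 s := by
        gcongr
        simpa [p] using sub_le_discountedExcess (L := c⁻¹) hT hlt (hε 0) s
      _ ≤ ∑' n, a n * p n s := (hsum s).le_tsum' 0
    have hsub : Tendsto (fun s : ℝ≥0 => s - 1) atTop atTop :=
      tendsto_atTop_atTop.2 fun b => ⟨b + 1, fun s hs => le_tsub_of_add_le_right hs⟩
    exact tendsto_atTop_mono hlower (hsub.const_mul_atTop (ha 0))
  · rw [← NNReal.tsum_mul_left]
    refine (hsum (T s)).tsum_le_tsum (fun n => ?_) ((hsum s).mul_left c)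
    have hpT : p n (T s) ≤ c * p n s :=
      (inv_mul_le_iff₀ hc).1 (mul_discountedExcess_map_le hT hlt (hε n) s)
    exact (mul_le_mul_of_nonneg_left hpT zero_le).trans_eq (mul_left_comm _ _ _)

end Contractions

section RelaxedDecrease

variable {B : ℝ≥0 → ℝ≥0}

lemma exists_classKInf_two_mul_add_map_eq (hB : ClassK B) :
    ∃ θ : ℝ≥0 → ℝ≥0, ClassKInf θ ∧ ∀ y, 2 * θ y + B (2 * θ y) = y := by
  have hB2 : ClassK fun s => B (2 * s) := hB.comp (classKInf_const_mul two_pos).classK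
  obtain ⟨e, he⟩ := ((classKInf_const_mul two_pos).add_monotone hB2.continuous hB2.monotone
    hB2.map_zero).exists_orderIso
  exact ⟨e.symm, classKInf_orderIso e.symm, fun y =>
    (congrFun he (e.symm y)).symm.trans (e.apply_symm_apply y)⟩

-- `y ≤ B w` forces `2 * θ ≤ w`. If `ε ≤ θ`, half of this decrease absorbs the error `ε` and the
-- other half remains; otherwise `y` itself is bounded in terms of `ε`.
lemma le_max_of_relaxed_decrease (hB : ClassK B) {θ y y' w ε : ℝ≥0}
    (hθ : 2 * θ + B (2 * θ) = y) (hyw : y ≤ B w) (hdecr : y' + w ≤ y + ε) :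
    y' ≤ max (θ + B (2 * θ)) (3 * ε + B (2 * ε)) := by
  have hθw : 2 * θ ≤ w := hB.strictMono.le_iff_le.1 ((le_add_self.trans_eq hθ).trans hyw)
  rcases le_total ε θ with hεθ | hθε
  · refine le_max_of_le_left (le_of_add_le_add_right (a := w) ?_)
    calc y' + w ≤ 2 * θ + B (2 * θ) + ε := by rwa [hθ]
      _ ≤ 2 * θ + B (2 * θ) + θ := by gcongr
      _ = θ + B (2 * θ) + 2 * θ := by ring
      _ ≤ θ + B (2 * θ) + w := by gcongr
  · refine le_max_of_le_right ?_
    calc y' ≤ 2 * θ + B (2 * θ) + ε := by rw [hθ]; exact le_self_add.trans hdecr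
      _ ≤ 2 * ε + B (2 * ε) + ε := by gcongr; exact hB.monotone (by gcongr)
      _ = 3 * ε + B (2 * ε) := by ring

lemma exists_classKInf_relaxed_decrease (hB : ClassK B) {c : ℝ≥0} (hc : 0 < c) :
    ∃ χ γ : ℝ≥0 → ℝ≥0, ClassKInf χ ∧ ClassK γ ∧
      ∀ y y' w ε, y ≤ B w → y' + w ≤ y + ε → χ y' ≤ max (c * χ y) (γ ε) := by
  obtain ⟨θ, hθ, hsplit⟩ := exists_classKInf_two_mul_add_map_eq hB
  have hB2 : ClassK fun s => B (2 * s) := hB.comp (classKInf_const_mul two_pos).classK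
  have hT : ClassK fun y => θ y + B (2 * θ y) :=
    (hθ.add_monotone (hB2.comp hθ.classK).continuous (hB2.comp hθ.classK).monotone
      (hB2.comp hθ.classK).map_zero).classK
  have hT_lt (y : ℝ≥0) (hy : 0 < y) : θ y + B (2 * θ y) < y := by
    have hpos : 0 < θ y := by simpa [hθ.classK.map_zero] using hθ.classK.strictMono hy
    calc θ y + B (2 * θ y) < θ y + (θ y + B (2 * θ y)) := lt_add_of_pos_left _ hpos
      _ = y := by rw [← add_assoc, ← two_mul, hsplit]
  obtain ⟨χ, hχ, hχT⟩ := exists_classKInf_map_le_mul hT.continuous hT.monotone hT_lt hc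
  have hγ : ClassK fun ε => 3 * ε + B (2 * ε) :=
    ((classKInf_const_mul three_pos).add_monotone hB2.continuous hB2.monotone hB2.map_zero).classK
  refine ⟨χ, _, hχ, hχ.classK.comp hγ, fun y y' w ε hyw hdecr => ?_⟩
  calc χ y' ≤ max (χ (θ y + B (2 * θ y))) (χ (3 * ε + B (2 * ε))) := by
        rw [← hχ.classK.monotone.map_max]
        exact hχ.classK.monotone (le_max_of_relaxed_decrease hB (hsplit y) hyw hdecr)
    _ ≤ max (c * χ y) (χ (3 * ε + B (2 * ε))) := max_le_max_right _ (hχT y)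

end RelaxedDecrease

section Concatenation

/-- The sequence that follows `u` for the first `j` terms and `v` from then on: it encodes applying
the control sequence `u` of length `j` and continuing with `v`. -/
def concatSeq {α : Type*} (j : ℕ) (u v : ℕ → α) : ℕ → α :=
  fun i => if i < j then u i else v (i - j)

variable {n m : ℕ} {X : Set (Fin n → ℝ)} {U : Set (Fin m → ℝ)}
  {g : (Fin n → ℝ) → (Fin m → ℝ) → (Fin n → ℝ)} {W : (Fin n → ℝ) → ℝ≥0}
  {ξ : Fin n → ℝ} {u v : ℕ → Fin m → ℝ} {N i j k : ℕ}

lemma iter_concatSeq_of_le (hij : i ≤ j) : iter g ξ (concatSeq j u v) i = iter g ξ u i := by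
  induction i with
  | zero => rfl
  | succ i ih =>
    rw [iter, iter, ih (Nat.le_of_succ_le hij), concatSeq, if_pos (Nat.lt_of_succ_le hij)]

lemma iter_concatSeq_add :
    iter g ξ (concatSeq j u v) (j + i) = iter g (iter g ξ u j) v i := by
  induction i with
  | zero => exact iter_concatSeq_of_le le_rfl
  | succ i ih => simp [iter, ih, concatSeq]

lemma iter_succ_eq_iter_tail :
    iter g ξ u (i + 1) = iter g (g ξ (u 0)) (fun k => u (k + 1)) i := by
  induction i with
  | zero => rfl
  | succ i ih => rw [iter, ih, iter]

lemma Adm.iter_mem (hu : Adm X U g ξ N u) (hξ : ξ ∈ X) (hi : i ≤ N) : iter g ξ u i ∈ X := by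
  cases i with
  | zero => exact hξ
  | succ i => exact (hu i hi).2

lemma Adm.mono (hu : Adm X U g ξ N u) (hk : k ≤ N) : Adm X U g ξ k u :=
  fun i hi => hu i (hi.trans_le hk)

lemma Adm.tail (hu : Adm X U g ξ (N + 1) u) :
    Adm X U g (g ξ (u 0)) N fun k => u (k + 1) := fun i hi => by
  rw [← iter_succ_eq_iter_tail]
  exact hu (i + 1) (Nat.succ_lt_succ hi)

lemma Adm.concatSeq (hu : Adm X U g ξ j u) (hv : Adm X U g (iter g ξ u j) k v) :
    Adm X U g ξ (j + k) (concatSeq j u v) := fun i hi => by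
  rcases lt_or_ge i j with hij | hji
  · rw [iter_concatSeq_of_le hij]
    simpa [_root_.concatSeq, hij] using hu i hij
  · obtain ⟨l, rfl⟩ := Nat.exists_eq_add_of_le hji
    rw [add_assoc, iter_concatSeq_add]
    simpa [_root_.concatSeq] using hv l (Nat.lt_of_add_lt_add_left hi)

lemma cost_concatSeq :
    cost W g (j + k) ξ (concatSeq j u v) = cost W g j ξ u + cost W g k (iter g ξ u j) v := by
  simp only [cost, sum_range_add, iter_concatSeq_add]
  congr 1
  exact sum_congr rfl fun i hi => by rw [iter_concatSeq_of_le (mem_range.1 hi).le]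

lemma cost_succ : cost W g (N + 1) ξ u = W ξ + cost W g N (g ξ (u 0)) fun k => u (k + 1) := by
  rw [cost, sum_range_succ', add_comm]
  simp only [iter_succ_eq_iter_tail]
  rfl

lemma cost_mono (hjk : j ≤ k) : cost W g j ξ u ≤ cost W g k ξ u :=
  sum_le_sum_of_subset (range_mono hjk)

lemma exists_iter_le_of_cost_le {w : ℝ≥0} (hN : 0 < N) (h : cost W g N ξ u ≤ N * w) :
    ∃ i < N, W (iter g ξ u i) ≤ w := by
  simpa using exists_le_of_sum_le (s := range N) (nonempty_range_iff.2 hN.ne')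
    (h.trans_eq (by simp : (N * w : ℝ≥0) = ∑ _i ∈ range N, w))

end Concatenation

section CostControllability

variable {n m : ℕ} {X : Set (Fin n → ℝ)} {U : Set (Fin m → ℝ)}
  {g : (Fin n → ℝ) → (Fin m → ℝ) → (Fin n → ℝ)} {W : (Fin n → ℝ) → ℝ≥0} {B : ℝ≥0 → ℝ≥0}

/-- Cost controllability of the running cost `W`: from every state the optimal cost is at most `B`
of the current running cost, uniformly in the horizon `N`. -/
def CostControllable (X : Set (Fin n → ℝ)) (U : Set (Fin m → ℝ))
    (g : (Fin n → ℝ) → (Fin m → ℝ) → (Fin n → ℝ)) (W : (Fin n → ℝ) → ℝ≥0) (B : ℝ≥0 → ℝ≥0) :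
    Prop :=
  ∀ N : ℕ, ∀ ξ ∈ X, ∃ u, Adm X U g ξ N u ∧ cost W g N ξ u ≤ B (W ξ)

lemma exists_adm_mul_cost_le {D : (Fin n → ℝ) → ℝ≥0} {M : ℕ} {q : (Fin n → ℝ) → ℕ → Fin m → ℝ}
    {c C : ℝ≥0} (hC : M + C * c ≤ C) (hq : ∀ ξ ∈ X, Adm X U g ξ M (q ξ))
    (hdecay : ∀ ξ ∈ X, D (iter g ξ (q ξ) M) ≤ c * D ξ)
    (hbound : ∀ ξ ∈ X, ∀ i < M, W (iter g ξ (q ξ) i) ≤ D ξ) (K : ℕ) {ξ : Fin n → ℝ} (hξ : ξ ∈ X) :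
    ∃ u, Adm X U g ξ (M * K) u ∧ cost W g (M * K) ξ u ≤ C * D ξ := by
  induction K generalizing ξ with
  | zero => exact ⟨q ξ, (hq ξ hξ).mono (Nat.zero_le M), by simp [cost]⟩
  | succ K ih =>
    obtain ⟨u, hu, hcost⟩ := ih ((hq ξ hξ).iter_mem hξ le_rfl)
    rw [Nat.mul_succ, add_comm]
    refine ⟨concatSeq M (q ξ) u, (hq ξ hξ).concatSeq hu, ?_⟩
    have hfirst : cost W g M ξ (q ξ) ≤ M * D ξ := by
      simpa [cost] using sum_le_card_nsmul (range M) _ _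
        fun i hi => hbound ξ hξ i (mem_range.1 hi)
    calc cost W g (M + M * K) ξ (concatSeq M (q ξ) u)
        = cost W g M ξ (q ξ) + cost W g (M * K) (iter g ξ (q ξ) M) u := cost_concatSeq
      _ ≤ M * D ξ + C * (c * D ξ) := by
          gcongr
          exact hcost.trans (by gcongr; exact hdecay ξ hξ)
      _ = (M + C * c) * D ξ := by ring
      _ ≤ C * D ξ := by gcongr

lemma exists_rescaling_costControllable {V : (Fin n → ℝ) → ℝ≥0} {M : ℕ} (hM : 1 ≤ M)
    {q : (Fin n → ℝ) → ℕ → Fin m → ℝ} (hq : ∀ ξ ∈ X, Adm X U g ξ M (q ξ))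
    {α : ℝ≥0 → ℝ≥0} (hα : Continuous α) (hα_mono : Monotone α) (hα_lt : ∀ s, 0 < s → α s < s)
    (hdecay : ∀ ξ ∈ X, V (iter g ξ (q ξ) M) ≤ α (V ξ))
    {κ : ℝ≥0 → ℝ≥0} (hκ : Continuous κ) (hκ_mono : Monotone κ) (hκ0 : κ 0 = 0)
    (htransient : ∀ ξ ∈ X, ∀ i, 1 ≤ i → i < M → V (iter g ξ (q ξ) i) ≤ κ (V ξ)) :
    ∃ ρ B : ℝ≥0 → ℝ≥0, ClassKInf ρ ∧ ClassK B ∧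
      CostControllable X U g (fun x => ρ (V x)) B := by
  obtain ⟨r, hr, hrα⟩ := exists_classKInf_map_le_mul hα hα_mono hα_lt (c := 1 / 2) (by positivity)
  obtain ⟨r, rfl⟩ := hr.exists_orderIso
  obtain ⟨σ, hσ⟩ := ((classKInf_orderIso (.refl ℝ≥0)).add_monotone hκ hκ_mono hκ0).exists_orderIso
  have hσ_apply (s : ℝ≥0) : σ s = s + κ s := congrFun hσ s
  have htransient_le (ξ) (hξ : ξ ∈ X) (i) (hi : i < M) : V (iter g ξ (q ξ) i) ≤ σ (V ξ) := by
    rw [hσ_apply]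
    rcases Nat.eq_zero_or_pos i with rfl | hpos
    · exact le_self_add
    · exact (htransient ξ hξ i hpos hi).trans le_add_self
  have hM_pos : (0 : ℝ≥0) < 2 * M := by positivity
  refine ⟨σ.symm.trans r, fun w => 2 * M * (r.symm.trans (σ.trans r)) w, classKInf_orderIso _,
    ((classKInf_const_mul hM_pos).comp (classKInf_orderIso _)).classK, fun N ξ hξ => ?_⟩
  obtain ⟨u, hu, hcost⟩ := exists_adm_mul_cost_le (W := fun x => σ.symm.trans r (V x))
    (D := fun x => r (V x)) (c := 1 / 2) (C := 2 * M) (by ring_nf; rfl) hq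
    (fun ξ hξ => (r.monotone (hdecay ξ hξ)).trans (hrα (V ξ)))
    (fun ξ hξ i hi => r.monotone (σ.symm_apply_le.2 (htransient_le ξ hξ i hi))) N hξ
  have hN : N ≤ M * N := Nat.le_mul_of_pos_left N hM
  exact ⟨u, hu.mono hN, (cost_mono hN).trans (by simpa using hcost)⟩

end CostControllability

section ModelPredictiveControl

variable {n m : ℕ} {X : Set (Fin n → ℝ)} {U : Set (Fin m → ℝ)}
  {g : (Fin n → ℝ) → (Fin m → ℝ) → (Fin n → ℝ)} {W : (Fin n → ℝ) → ℝ≥0} {B : ℝ≥0 → ℝ≥0}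
  {N : ℕ} {uopt : (Fin n → ℝ) → ℕ → Fin m → ℝ}

/-- The cost of the control sequence selected by `uopt` at `x`: the optimal value function of the
horizon-`N` problem when `uopt` selects optimal sequences. -/
def optValue (W : (Fin n → ℝ) → ℝ≥0) (g : (Fin n → ℝ) → (Fin m → ℝ) → (Fin n → ℝ)) (N : ℕ)
    (uopt : (Fin n → ℝ) → ℕ → Fin m → ℝ) (x : Fin n → ℝ) : ℝ≥0 :=
  cost W g N x (uopt x)

lemma le_optValue_succ (x : Fin n → ℝ) : W x ≤ optValue W g (N + 1) uopt x :=
  le_self_add.trans_eq cost_succ.symm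

lemma IsOptSel.optValue_le (hopt : IsOptSel X U g W N uopt) (hW : CostControllable X U g W B)
    {x : Fin n → ℝ} (hx : x ∈ X) : optValue W g N uopt x ≤ B (W x) := by
  obtain ⟨u, hu, hcost⟩ := hW N x hx
  exact ((hopt x hx).2 u hu).trans hcost

lemma IsOptSel.step_mem (hopt : IsOptSel X U g W (N + 1) uopt) {x : Fin n → ℝ} (hx : x ∈ X) :
    g x (uopt x 0) ∈ X :=
  ((hopt x hx).1 0 N.succ_pos).2

-- The optimal tail meets a state of running cost at most `w`; following it up to there and then a
-- cheap sequence of full horizon length gives a competitor for the next optimal control problem.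
lemma IsOptSel.optValue_step_add_le (hopt : IsOptSel X U g W (N + 1) uopt)
    (hW : CostControllable X U g W B) (hB : Monotone B) (hN : 0 < N) {w : ℝ≥0}
    {x : Fin n → ℝ} (hx : x ∈ X) (hxw : optValue W g (N + 1) uopt x ≤ N * w) :
    optValue W g (N + 1) uopt (g x (uopt x 0)) + W x ≤ optValue W g (N + 1) uopt x + B w := by
  set x' := g x (uopt x 0)
  let v : ℕ → Fin m → ℝ := fun k => uopt x (k + 1)
  have hx' : x' ∈ X := hopt.step_mem hx
  have hv : Adm X U g x' N v := (hopt x hx).1.tail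
  have hvalue : optValue W g (N + 1) uopt x = W x + cost W g N x' v := cost_succ
  obtain ⟨i, hiN, hiw⟩ :=
    exists_iter_le_of_cost_le hN ((le_add_self.trans_eq hvalue.symm).trans hxw)
  obtain ⟨u, hu, hcost⟩ := hW (N + 1 - i) _ (hv.iter_mem hx' hiN.le)
  have hlen : i + (N + 1 - i) = N + 1 := Nat.add_sub_of_le (hiN.le.trans N.le_succ)
  have hcompetitor : Adm X U g x' (N + 1) (concatSeq i v u) :=
    hlen ▸ (hv.mono hiN.le).concatSeq hu
  have hnext : optValue W g (N + 1) uopt x' ≤ cost W g N x' v + B w := calc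
    optValue W g (N + 1) uopt x' ≤ cost W g (N + 1) x' (concatSeq i v u) :=
      (hopt x' hx').2 _ hcompetitor
    _ = cost W g i x' v + cost W g (N + 1 - i) (iter g x' v i) u := by
      rw [← cost_concatSeq, hlen]
    _ ≤ cost W g N x' v + B w := add_le_add (cost_mono hiN.le) (hcost.trans (hB hiw))
  calc optValue W g (N + 1) uopt x' + W x ≤ cost W g N x' v + B w + W x := by gcongr
    _ = optValue W g (N + 1) uopt x + B w := by rw [hvalue]; ring

lemma IsOptSel.map_optValue_mpcLoop_le (hopt : IsOptSel X U g W (N + 1) uopt)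
    (hW : CostControllable X U g W B) (hB : Monotone B) (hN : 0 < N) {χ γ : ℝ≥0 → ℝ≥0}
    (hχ : StrictMono χ) {c : ℝ≥0} (hc : c ≤ 1)
    (hdecr : ∀ y y' w ε, y ≤ B w → y' + w ≤ y + ε → χ y' ≤ max (c * χ y) (γ ε))
    {w : ℝ≥0} (hw : γ (B w) ≤ χ (N * w)) {ξ : Fin n → ℝ} (hξ : ξ ∈ X)
    (hξw : optValue W g (N + 1) uopt ξ ≤ N * w) (t : ℕ) :
    mpcLoop g uopt ξ t ∈ X ∧ χ (optValue W g (N + 1) uopt (mpcLoop g uopt ξ t)) ≤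
      max (c ^ t * χ (optValue W g (N + 1) uopt ξ)) (γ (B w)) := by
  induction t with
  | zero => exact ⟨hξ, by simp [mpcLoop]⟩
  | succ t ih =>
    obtain ⟨hx, hbound⟩ := ih
    set x := mpcLoop g uopt ξ t
    set y₀ := optValue W g (N + 1) uopt ξ
    have hxw : optValue W g (N + 1) uopt x ≤ N * w := hχ.le_iff_le.1 <| calc
      χ (optValue W g (N + 1) uopt x) ≤ max (c ^ t * χ y₀) (γ (B w)) := hbound
      _ ≤ χ (N * w) :=
        max_le ((mul_le_of_le_one_left' (pow_le_one' hc t)).trans (hχ.monotone hξw)) hw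
    refine ⟨hopt.step_mem hx, ?_⟩
    calc χ (optValue W g (N + 1) uopt (g x (uopt x 0)))
        ≤ max (c * χ (optValue W g (N + 1) uopt x)) (γ (B w)) :=
          hdecr _ _ _ _ (hopt.optValue_le hW hx) (hopt.optValue_step_add_le hW hB hN hx hxw)
      _ ≤ max (c * max (c ^ t * χ y₀) (γ (B w))) (γ (B w)) := by gcongr
      _ = max (c ^ (t + 1) * χ y₀) (max (c * γ (B w)) (γ (B w))) := by
          rw [mul_max, max_assoc, pow_succ', mul_assoc]
      _ = max (c ^ (t + 1) * χ y₀) (γ (B w)) := by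
          rw [max_eq_right (mul_le_of_le_one_left' hc)]

theorem CostControllable.mpc_practically_stable {ω : (Fin n → ℝ) → ℝ≥0}
    (hW : CostControllable X U g W B) (hB : ClassK B) {a₁ a₂ : ℝ≥0 → ℝ≥0} (ha₁ : ClassKInf a₁)
    (ha₂ : ClassK a₂) (hsandwich : ∀ ξ ∈ X, a₁ (ω ξ) ≤ W ξ ∧ W ξ ≤ a₂ (ω ξ)) :
    ∃ β : ℝ≥0 → ℝ≥0 → ℝ≥0, ClassKL β ∧ ∀ δ, 0 < δ → ∀ Δ, ∃ N₀ : ℕ, ∀ N, N₀ ≤ N →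
      ∀ uopt, IsOptSel X U g W N uopt → ∀ ξ ∈ X, ω ξ < Δ →
        ∀ t : ℕ, ω (mpcLoop g uopt ξ t) ≤ max (β (ω ξ) t) δ := by
  obtain ⟨χ, γ, hχ, hγ, hdecr⟩ := exists_classKInf_relaxed_decrease hB (c := 1 / 2) (by positivity)
  obtain ⟨Φ, hΦ⟩ := (hχ.comp ha₁).exists_orderIso
  have hΦ_apply (s : ℝ≥0) : Φ s = χ (a₁ s) := congrFun hΦ s
  have hΨ : ClassK fun s => χ (B (a₂ s)) := hχ.classK.comp (hB.comp ha₂)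
  refine ⟨_, classKL_comp_rpow_mul (classKInf_orderIso Φ.symm).classK hΨ (c := 1 / 2)
    (by positivity) (NNReal.half_lt_self one_ne_zero), fun δ hδ Δ => ?_⟩
  obtain ⟨w, hw_pos, hw⟩ := (hγ.comp hB).exists_pos_map_le (ε := Φ δ) <| by
    simpa [(classKInf_orderIso Φ).classK.map_zero] using Φ.strictMono hδ
  obtain ⟨N₁, hN₁⟩ := Archimedean.arch (max (B (a₂ Δ)) (a₁ δ)) hw_pos
  refine ⟨N₁ + 2, fun N hN uopt hopt ξ hξ hξΔ t => ?_⟩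
  obtain ⟨N, rfl⟩ := Nat.exists_eq_add_one_of_ne_zero (by omega : N ≠ 0)
  have hNw : max (B (a₂ Δ)) (a₁ δ) ≤ N * w := hN₁.trans <| by
    rw [nsmul_eq_mul]
    gcongr
    omega
  have hvalue : optValue W g (N + 1) uopt ξ ≤ B (a₂ (ω ξ)) :=
    (hopt.optValue_le hW hξ).trans (hB.monotone (hsandwich ξ hξ).2)
  obtain ⟨hx, hbound⟩ := hopt.map_optValue_mpcLoop_le hW hB.monotone (by omega)
    hχ.classK.strictMono (by norm_num) hdecr
    (hw.trans (hΦ_apply δ ▸ hχ.classK.monotone ((le_max_right _ _).trans hNw))) hξ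
    (hvalue.trans ((hB.comp ha₂).monotone hξΔ.le |>.trans ((le_max_left _ _).trans hNw))) t
  set x := mpcLoop g uopt ξ t
  have hΦx : Φ (ω x) ≤ max ((1 / 2) ^ t * χ (B (a₂ (ω ξ)))) (Φ δ) := calc
    Φ (ω x) ≤ χ (optValue W g (N + 1) uopt x) := by
      rw [hΦ_apply]
      exact hχ.classK.monotone ((hsandwich x hx).1.trans (le_optValue_succ x))
    _ ≤ max ((1 / 2) ^ t * χ (optValue W g (N + 1) uopt ξ)) (γ (B w)) := hbound
    _ ≤ max ((1 / 2) ^ t * χ (B (a₂ (ω ξ)))) (Φ δ) := by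
      gcongr
      exact hχ.classK.monotone hvalue
  have hx_le := Φ.symm.monotone hΦx
  rw [Φ.symm.monotone.map_max] at hx_le
  simpa using hx_le

end ModelPredictiveControl

theorem mpc_rescaled_cost_practically_stable_general {n m : ℕ} {X : Set (Fin n → ℝ)}
    {U : Set (Fin m → ℝ)} {g : (Fin n → ℝ) → (Fin m → ℝ) → (Fin n → ℝ)} {ω : (Fin n → ℝ) → ℝ≥0}
    {M : ℕ} (hM : 1 ≤ M) {V : (Fin n → ℝ) → ℝ≥0} {ulα olα : ℝ≥0 → ℝ≥0} (hulα : ClassKInf ulα)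
    (holα : ClassK olα) (hsandwich : ∀ ξ ∈ X, ulα (ω ξ) ≤ V ξ ∧ V ξ ≤ olα (ω ξ))
    {q : (Fin n → ℝ) → ℕ → Fin m → ℝ} (hq : ∀ ξ ∈ X, Adm X U g ξ M (q ξ))
    {α : ℝ≥0 → ℝ≥0} (hα : Continuous α) (hα_mono : Monotone α) (hα_lt : ∀ s, 0 < s → α s < s)
    (hdecay : ∀ ξ ∈ X, V (iter g ξ (q ξ) M) ≤ α (V ξ))
    {κ : ℝ≥0 → ℝ≥0} (hκ : Continuous κ) (hκ_mono : Monotone κ) (hκ0 : κ 0 = 0)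
    (htransient : ∀ ξ ∈ X, ∀ i, 1 ≤ i → i < M → V (iter g ξ (q ξ) i) ≤ κ (V ξ)) :
    ∃ ρ : ℝ≥0 → ℝ≥0, ClassKInf ρ ∧ ∃ β : ℝ≥0 → ℝ≥0 → ℝ≥0, ClassKL β ∧
      ∀ δ, 0 < δ → ∀ Δ, ∃ N₀ : ℕ, ∀ N, N₀ ≤ N →
        ∀ uopt, IsOptSel X U g (fun x => ρ (V x)) N uopt → ∀ ξ ∈ X, ω ξ < Δ →
          ∀ t : ℕ, ω (mpcLoop g uopt ξ t) ≤ max (β (ω ξ) t) δ := by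
  obtain ⟨ρ, B, hρ, hB, hcontrollable⟩ := exists_rescaling_costControllable hM hq hα hα_mono hα_lt
    hdecay hκ hκ_mono hκ0 htransient
  exact ⟨ρ, hρ, hcontrollable.mpc_practically_stable hB (hρ.comp hulα) (hρ.classK.comp holα)
    fun ξ hξ => (hsandwich ξ hξ).imp (hρ.classK.monotone ·) (hρ.classK.monotone ·)⟩

/-- (Theorem (iii): there exists a rescaling `ρ ∈ K∞` such that the classic
MPC scheme with running cost `Ṽ = ρ ∘ V` is semiglobally practically asymptotically
ω-stabilizing w.r.t. the optimization horizon `N`). -/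
theorem mpc_rescaled_cost_practically_stable {n m : ℕ}
    (X : Set (Fin n → ℝ)) (U : Set (Fin m → ℝ))
    (g : (Fin n → ℝ) → (Fin m → ℝ) → (Fin n → ℝ))
    (hg : ContinuousOn (fun p : (Fin n → ℝ) × (Fin m → ℝ) => g p.1 p.2) (X ×ˢ U))
    (ω : (Fin n → ℝ) → ℝ≥0) (hω : Continuous ω) (hωzero : ∃ x, ω x = 0)
    (M : ℕ) (hM : 1 ≤ M)
    (V : (Fin n → ℝ) → ℝ≥0) (hV : Continuous V)
    (ulα olα : ℝ≥0 → ℝ≥0) (hulα : ClassKInf ulα) (holα : ClassKInf olα)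
    (hsandwich : ∀ ξ, ulα (ω ξ) ≤ V ξ ∧ V ξ ≤ olα (ω ξ))
    (q : (Fin n → ℝ) → ℕ → Fin m → ℝ) (hq : IsAfcl ω X U g M q)
    (α : ℝ≥0 → ℝ≥0) (hα : ClassKInf α) (hαlt : ∀ s : ℝ≥0, 0 < s → α s < s)
    (hdecay : ∀ ξ ∈ X, V (iter g ξ (q ξ) M) ≤ α (V ξ))
    -- transient bound `V(g^i(ξ,q(ξ))) ≤ κ̂(V(ξ))` with `κ̂ ∈ K∞`
    (κhat : ℝ≥0 → ℝ≥0) (hκhat : ClassKInf κhat)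
    (htransient : ∀ ξ ∈ X, ∀ i : ℕ, 1 ≤ i → i < M → V (iter g ξ (q ξ) i) ≤ κhat (V ξ)) :
    -- there exists `ρ ∈ K∞` such that MPC with running cost `Ṽ = ρ ∘ V` is semiglobally
    -- practically asymptotically ω-stabilizing w.r.t. the optimization horizon `N`:
    ∃ ρ : ℝ≥0 → ℝ≥0, ClassKInf ρ ∧
      ∀ uopt : ℕ → (Fin n → ℝ) → ℕ → Fin m → ℝ,
        (∀ N : ℕ, 1 ≤ N → IsOptSel X U g (fun x => ρ (V x)) N (uopt N)) →
        ∃ β : ℝ≥0 → ℝ≥0 → ℝ≥0, ClassKL β ∧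
          ∀ δ : ℝ≥0, 0 < δ → ∀ Δ : ℝ≥0, δ < Δ → ∃ N₀ : ℕ, 1 ≤ N₀ ∧
            ∀ N : ℕ, N₀ ≤ N → ∀ ξ ∈ X, ω ξ < Δ →
              ∀ t : ℕ, ω (mpcLoop g (uopt N) ξ t) ≤ max (β (ω ξ) (t : ℝ≥0)) δ := by
  have hq_adm (ξ) (hξ : ξ ∈ X) : Adm X U g ξ M (q ξ) := fun j hj =>
    ⟨hq.1 ξ hξ j hj, hq.2.1 ξ hξ (j + 1) j.succ_pos hj⟩
  obtain ⟨ρ, hρ, β, hβ, hstable⟩ := mpc_rescaled_cost_practically_stable_general hM hulα holα.classK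
    (fun ξ _ => hsandwich ξ) hq_adm hα.classK.continuous hα.classK.monotone hαlt hdecay
    hκhat.classK.continuous hκhat.classK.monotone hκhat.classK.map_zero htransient
  refine ⟨ρ, hρ, fun uopt hopt => ⟨β, hβ, fun δ hδ Δ _ => ?_⟩⟩
  obtain ⟨N₀, hN₀⟩ := hstable δ hδ Δ
  exact ⟨N₀ + 1, N₀.succ_pos, fun N hN =>
    hN₀ N (Nat.le_of_succ_le hN) (uopt N) (hopt N (Nat.one_le_of_lt hN))⟩
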